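/- With the notation of the concrete construction (Ω = ZMod 8 × ZMod k × ZMod r with k odd and r ∈ {1,3}): the subgroup H = ⟨τ₁,τ₂⟩ of Sym(Ω) has order 16, and every element of H can be written as τ₂^ℓ ∘ h^ε for some ℓ ∈ {0,…,7} and ε ∈ {0,1}, where h is the permutation of Ω acting on the first coordinate as the product of transpositions (1 5)(3 7) and fixing the other coordinates. -/

import Mathlib

open Equiv

instance : DecidablePred (Even : ZMod 8 → Prop) := fun i =>
  decidable_of_iff (∃ x : ZMod 8, i = x + x) Iff.rfl

/-- The permutation of `ZMod 8` given by the 8-cycle (0 1 2 3 4 5 6 7). -/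
def sigma1 : Equiv.Perm (ZMod 8) := Equiv.addRight (1 : ZMod 8)

/-- The permutation of `ZMod 8` given by the 8-cycle (0 1 6 7 4 5 2 3). -/
def sigma2 : Equiv.Perm (ZMod 8) where
  toFun i := if Even i then i + 1 else i + 5
  invFun i := if Even i then i + 3 else i - 1
  left_inv := by decide
  right_inv := by decide

def tau1 (k r : ℕ) : Equiv.Perm (ZMod 8 × ZMod k × ZMod r) :=
  sigma1.prodCongr (Equiv.refl _)

def tau2 (k r : ℕ) : Equiv.Perm (ZMod 8 × ZMod k × ZMod r) :=
  sigma2.prodCongr (Equiv.refl _)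

def rho1 (k r : ℕ) : Equiv.Perm (ZMod 8 × ZMod k × ZMod r) where
  toFun x := if Even x.1 then (x.1, x.2.1 + 1, x.2.2) else (x.1, x.2.1 - 1, x.2.2)
  invFun x := if Even x.1 then (x.1, x.2.1 - 1, x.2.2) else (x.1, x.2.1 + 1, x.2.2)
  left_inv := by rintro ⟨i, j, l⟩; by_cases h : Even i <;> simp [h]
  right_inv := by rintro ⟨i, j, l⟩; by_cases h : Even i <;> simp [h]

def rho2 (k r : ℕ) : Equiv.Perm (ZMod 8 × ZMod k × ZMod r) where
  toFun x := if Even x.1 then (x.1, x.2.1, x.2.2 + 1) else (x.1, x.2.1, x.2.2 - 1)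
  invFun x := if Even x.1 then (x.1, x.2.1, x.2.2 - 1) else (x.1, x.2.1, x.2.2 + 1)
  left_inv := by rintro ⟨i, j, l⟩; by_cases h : Even i <;> simp [h]
  right_inv := by rintro ⟨i, j, l⟩; by_cases h : Even i <;> simp [h]

/-- The permutation of `ZMod 8 × ZMod k × ZMod r` acting on the first coordinate as the
product of transpositions (1 5)(3 7) and fixing the other coordinates. -/
def hperm (k r : ℕ) : Equiv.Perm (ZMod 8 × ZMod k × ZMod r) :=
  ((Equiv.swap (1 : ZMod 8) 5).trans (Equiv.swap (3 : ZMod 8) 7)).prodCongr (Equiv.refl _)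

def R1 (k r : ℕ) : Subgroup (Equiv.Perm (ZMod 8 × ZMod k × ZMod r)) :=
  Subgroup.closure {tau1 k r, rho1 k r, rho2 k r}

def R2 (k r : ℕ) : Subgroup (Equiv.Perm (ZMod 8 × ZMod k × ZMod r)) :=
  Subgroup.closure {tau2 k r, rho1 k r, rho2 k r}

def Ggrp (k r : ℕ) : Subgroup (Equiv.Perm (ZMod 8 × ZMod k × ZMod r)) :=
  R1 k r ⊔ R2 k r

def Hgrp (k r : ℕ) : Subgroup (Equiv.Perm (ZMod 8 × ZMod k × ZMod r)) :=
  Subgroup.closure {tau1 k r, tau2 k r}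

/-!
In one coordinate, `σ₁ = σ₂ η` with `η = (1 5)(3 7)`, so `⟨σ₁, σ₂⟩ = ⟨σ₂⟩⟨η⟩`, because
`η σ₂ η⁻¹ = σ₂ ^ 5` makes `⟨η⟩` normalize `⟨σ₂⟩`. A power of the cycle `σ₂` that fixes `0` is
trivial, whereas `η` fixes `0`. Hence `⟨σ₂⟩` and `⟨η⟩` intersect trivially and the product has order
`8 * 2`. Acting on the first coordinate of `ZMod 8 × β` embeds this group into the permutations of
the product.
-/

open Subgroup

section ProductOfSubgroups

variable {G : Type*} [Group G]

theorem closure_mul_pair_eq_zpowers_sup (a b : G) : closure {a * b, a} = zpowers a ⊔ zpowers b := by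
  apply le_antisymm
  · rw [closure_le, Set.pair_subset_iff]
    have ha : a ∈ zpowers a ⊔ zpowers b := mem_sup_left (mem_zpowers a)
    exact ⟨mul_mem ha (mem_sup_right (mem_zpowers b)), ha⟩
  · have ha : a ∈ closure {a * b, a} := subset_closure (by simp)
    have hab : a * b ∈ closure {a * b, a} := subset_closure (by simp)
    rw [sup_le_iff, zpowers_le, zpowers_le]
    exact ⟨ha, (mul_mem_cancel_left ha).mp hab⟩

theorem zpowers_le_normalizer_zpowers {a b : G} {m : ℤ} (ha : IsOfFinOrder a)
    (hab : SemiconjBy b a (a ^ m)) : zpowers b ≤ normalizer (zpowers a) := by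
  have : Finite (zpowers a) := ha.finite_zpowers
  rw [zpowers_le]
  refine mem_normalizer_fintype ?_
  rintro _ ⟨n, rfl⟩
  have conj_eq : b * a ^ n * b⁻¹ = (a ^ m) ^ n := by
    rw [(hab.zpow_right n).eq, mul_inv_cancel_right]
  exact conj_eq ▸ zpow_mem (zpow_mem (mem_zpowers a) m) n

theorem card_sup_of_disjoint {N K : Subgroup G} (hK : K ≤ normalizer N) (hNK : Disjoint N K) :
    Nat.card ↥(N ⊔ K) = Nat.card N * Nat.card K := by
  rw [← Nat.card_prod, ← Nat.card_range_of_injective (mul_injective_of_disjoint hNK)]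
  have range_eq : Set.range (fun p : N × K => (p.1 * p.2 : G)) = (N ⊔ K : Subgroup G) := by
    rw [coe_mul_of_right_le_normalizer_left N K hK]
    ext g
    simp [Set.mem_mul]
  rw [range_eq]
  rfl

theorem exists_pow_mul_pow_of_mem_zpowers_sup {a b g : G} (ha : IsOfFinOrder a)
    (hb : IsOfFinOrder b) (hab : zpowers b ≤ normalizer (zpowers a))
    (hg : g ∈ zpowers a ⊔ zpowers b) :
    ∃ ℓ < orderOf a, ∃ ε < orderOf b, g = a ^ ℓ * b ^ ε := by
  classical
  rw [← SetLike.mem_coe, coe_mul_of_right_le_normalizer_left _ _ hab] at hg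
  obtain ⟨x, hx, y, hy, rfl⟩ := hg
  rw [SetLike.mem_coe, ha.mem_zpowers_iff_mem_range_orderOf, Finset.mem_image] at hx
  rw [SetLike.mem_coe, hb.mem_zpowers_iff_mem_range_orderOf, Finset.mem_image] at hy
  obtain ⟨ℓ, hℓ, rfl⟩ := hx
  obtain ⟨ε, hε, rfl⟩ := hy
  exact ⟨ℓ, Finset.mem_range.mp hℓ, ε, Finset.mem_range.mp hε, rfl⟩

end ProductOfSubgroups

section Perm

variable {α : Type*}

theorem zpow_eq_one_of_isCycle_of_zpow_apply_eq_self {c : Perm α} (hc : c.IsCycle) {x : α}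
    (hx : c x ≠ x) {n : ℤ} (hn : (c ^ n) x = x) : c ^ n = 1 := by
  ext y
  by_cases hy : c y = y
  · exact Perm.zpow_apply_eq_self_of_apply_eq_self hy n
  · obtain ⟨i, rfl⟩ := hc.exists_zpow_eq hx hy
    rw [← Perm.mul_apply, zpow_mul_comm, Perm.mul_apply, hn, Perm.one_apply]

theorem disjoint_zpowers_of_isCycle_of_apply_eq_self {c f : Perm α} (hc : c.IsCycle) {x : α}
    (hcx : c x ≠ x) (hfx : f x = x) : Disjoint (zpowers c) (zpowers f) := by
  rw [Subgroup.disjoint_def]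
  rintro _ ⟨n, rfl⟩ ⟨m, hm : f ^ m = c ^ n⟩
  refine zpow_eq_one_of_isCycle_of_zpow_apply_eq_self hc hcx ?_
  rw [← hm]
  exact Perm.zpow_apply_eq_self_of_apply_eq_self hfx m

/-- The homomorphism letting a permutation of `α` act on the first coordinate of `α × β`. It sends
`sigma1`, `sigma2` and `eta` to `tau1 k r`, `tau2 k r` and `hperm k r` when
`β = ZMod k × ZMod r`. -/
def permProdReflHom (α β : Type*) : Perm α →* Perm (α × β) where
  toFun σ := σ.prodCongr (Equiv.refl β)
  map_one' := rfl
  map_mul' _ _ := rfl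

theorem permProdReflHom_injective (α β : Type*) [Nonempty β] :
    Function.Injective (permProdReflHom α β) := by
  intro σ τ h
  obtain ⟨b⟩ := ‹Nonempty β›
  ext x
  exact congrArg Prod.fst (Equiv.congr_fun h (x, b))

end Perm

/-- The product of transpositions (1 5)(3 7) of `ZMod 8`, the action of `hperm k r` on the first
coordinate. -/
def eta : Perm (ZMod 8) := (swap (1 : ZMod 8) 5).trans (swap (3 : ZMod 8) 7)

theorem sigma1_eq_sigma2_mul_eta : sigma1 = sigma2 * eta := by decide

theorem sigma2_eq_formPerm : sigma2 = [0, 1, 6, 7, 4, 5, 2, 3].formPerm := by decide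

theorem isCycle_sigma2 : sigma2.IsCycle := by
  rw [sigma2_eq_formPerm]
  exact List.isCycle_formPerm (by decide) (by decide)

theorem orderOf_sigma2 : orderOf sigma2 = 8 := by
  have support_eq : sigma2.support = Finset.univ := by decide
  rw [isCycle_sigma2.orderOf, support_eq, Finset.card_univ, ZMod.card]

theorem orderOf_eta : orderOf eta = 2 := orderOf_eq_prime (by decide) (by decide)

theorem semiconjBy_eta_sigma2 : SemiconjBy eta sigma2 (sigma2 ^ (5 : ℤ)) := by
  have : eta * sigma2 = sigma2 ^ 5 * eta := by decide
  exact_mod_cast this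

theorem closure_sigma1_sigma2 : closure {sigma1, sigma2} = zpowers sigma2 ⊔ zpowers eta := by
  rw [sigma1_eq_sigma2_mul_eta, closure_mul_pair_eq_zpowers_sup]

theorem zpowers_eta_le_normalizer : zpowers eta ≤ normalizer (zpowers sigma2) :=
  zpowers_le_normalizer_zpowers (isOfFinOrder_of_finite sigma2) semiconjBy_eta_sigma2

theorem card_closure_sigma1_sigma2 : Nat.card (closure {sigma1, sigma2}) = 16 := by
  have disjoint_zpowers : Disjoint (zpowers sigma2) (zpowers eta) :=
    disjoint_zpowers_of_isCycle_of_apply_eq_self (x := 0) isCycle_sigma2 (by decide) (by decide)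
  rw [closure_sigma1_sigma2, card_sup_of_disjoint zpowers_eta_le_normalizer disjoint_zpowers,
    Nat.card_zpowers, Nat.card_zpowers, orderOf_sigma2, orderOf_eta]

theorem exists_sigma2_pow_mul_eta_pow_of_mem_closure {σ : Perm (ZMod 8)}
    (hσ : σ ∈ closure {sigma1, sigma2}) : ∃ ℓ < 8, ∃ ε ≤ 1, σ = sigma2 ^ ℓ * eta ^ ε := by
  rw [closure_sigma1_sigma2] at hσ
  simpa only [orderOf_sigma2, orderOf_eta, Nat.lt_succ_iff (n := 1)] using
    exists_pow_mul_pow_of_mem_zpowers_sup (isOfFinOrder_of_finite sigma2)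
      (isOfFinOrder_of_finite eta) zpowers_eta_le_normalizer hσ

theorem Hgrp_card_and_form_general (β : Type*) [Nonempty β] :
    let φ := permProdReflHom (ZMod 8) β
    Nat.card (closure {φ sigma1, φ sigma2}) = 16 ∧
      ∀ σ ∈ closure {φ sigma1, φ sigma2}, ∃ ℓ < 8, ∃ ε ≤ 1, σ = φ sigma2 ^ ℓ * φ eta ^ ε := by
  intro φ
  have closure_eq_map : closure {φ sigma1, φ sigma2} = (closure {sigma1, sigma2}).map φ := by
    rw [MonoidHom.map_closure, Set.image_pair]
  rw [closure_eq_map]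
  constructor
  · rw [card_map_of_injective (permProdReflHom_injective _ _), card_closure_sigma1_sigma2]
  · rintro _ ⟨σ, hσ, rfl⟩
    obtain ⟨ℓ, hℓ, ε, hε, rfl⟩ := exists_sigma2_pow_mul_eta_pow_of_mem_closure hσ
    exact ⟨ℓ, hℓ, ε, hε, by rw [map_mul, map_pow, map_pow]⟩

/-- `H = ⟨τ₁, τ₂⟩` has order `16`, and every element of `H` can be written as
`τ₂ ^ ℓ * h ^ ε` with `0 ≤ ℓ ≤ 7` and `ε ∈ {0, 1}`, where `h` is the permutation acting
on the first coordinate as the product of transpositions (1 5)(3 7). -/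
theorem Hgrp_card_and_form (k r : ℕ) (hk0 : 0 < k) (hk : Odd k) (hr : r = 1 ∨ r = 3) :
    Nat.card (Hgrp k r) = 16 ∧
      ∀ σ ∈ Hgrp k r, ∃ ℓ < 8, ∃ ε ≤ 1, σ = tau2 k r ^ ℓ * hperm k r ^ ε :=
  Hgrp_card_and_form_general (ZMod k × ZMod r)
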